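/- The subgroup of GL₃(ℚ) generated by the matrices M_X, M_Y, M_τ is isomorphic to the presented group G₁ = ⟨X, Y, τ | X Y X⁻¹ Y⁻¹ = τ⁴, X τ X⁻¹ τ⁻¹ = 1, Y τ Y⁻¹ τ⁻¹ = 1⟩, via the homomorphism sending X ↦ M_X, Y ↦ M_Y, τ ↦ M_τ (i.e. this homomorphism from G₁ onto the matrix group is an isomorphism). -/

import Mathlib

/-!
The relations make `τ` central in `G₁` and give `Xᵃ Yᵇ = Yᵇ Xᵃ τ⁴ᵃᵇ` for all integers `a`, `b`.
Hence the words `Yᵇ Xᵃ τᶜ` form a subgroup, which is all of `G₁`. The matrix of such a word is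
unitriangular with entries `a`, `b` above the diagonal and `c / 4` in the corner, so it determines
`a`, `b`, `c` and the homomorphism to matrices is injective.
-/

/-- The three generators X, Y, τ. -/
inductive Gen3 : Type
  | gX : Gen3
  | gY : Gen3
  | gT : Gen3

/-- The matrix M_X. -/
def MX : Matrix (Fin 3) (Fin 3) ℚ := !![1, 1, 0; 0, 1, 0; 0, 0, 1]

/-- The matrix M_Y. -/
def MY : Matrix (Fin 3) (Fin 3) ℚ := !![1, 0, 0; 0, 1, 1; 0, 0, 1]

/-- The matrix M_τ. -/
def MT : Matrix (Fin 3) (Fin 3) ℚ := !![1, 0, 1/4; 0, 1, 0; 0, 0, 1]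

/-- The relators [X,Y]τ⁻⁴, [X,τ], [Y,τ] of the presented group G₁. -/
def heisRels : Set (FreeGroup Gen3) :=
  { FreeGroup.of Gen3.gX * FreeGroup.of Gen3.gY * (FreeGroup.of Gen3.gX)⁻¹ *
      (FreeGroup.of Gen3.gY)⁻¹ * ((FreeGroup.of Gen3.gT) ^ 4)⁻¹,
    FreeGroup.of Gen3.gX * FreeGroup.of Gen3.gT * (FreeGroup.of Gen3.gX)⁻¹ *
      (FreeGroup.of Gen3.gT)⁻¹,
    FreeGroup.of Gen3.gY * FreeGroup.of Gen3.gT * (FreeGroup.of Gen3.gY)⁻¹ *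
      (FreeGroup.of Gen3.gT)⁻¹ }

open scoped commutatorElement

section PresentedGroup

variable {α G : Type*} [Group G] {rels : Set (FreeGroup α)} {f : α → G}

lemma range_toGroup (h : ∀ r ∈ rels, FreeGroup.lift f r = 1) :
    (PresentedGroup.toGroup h).range = Subgroup.closure (Set.range f) := by
  rw [MonoidHom.range_eq_map, ← PresentedGroup.closure_range_of, MonoidHom.map_closure,
    ← Set.range_comp]
  simp only [Function.comp_def, PresentedGroup.toGroup.of]

end PresentedGroup

section CentralCommutator

variable {G : Type*} [Group G] {x y t : G}

lemma zpow_mul_zpow_of_commute_commutator (hx : Commute x ⁅x, y⁆) (hy : Commute y ⁅x, y⁆)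
    (a b : ℤ) : x ^ a * y ^ b = y ^ b * x ^ a * ⁅x, y⁆ ^ (a * b) := by
  have conj_y : SemiconjBy x y (y * ⁅x, y⁆) := by
    rw [hy.eq, SemiconjBy, commutatorElement_def]
    group
  have conj_x : SemiconjBy (y ^ b) (x * ⁅x, y⁆ ^ b) x := by
    have h := (conj_y.zpow_right b).eq
    rw [hy.mul_zpow] at h
    rw [SemiconjBy, h, (hx.zpow_right b).eq, mul_assoc]
  have h := (conj_x.zpow_right a).eq
  rw [(hx.zpow_right b).mul_zpow, ← zpow_mul, mul_comm b a, ← mul_assoc] at h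
  exact h.symm

/-- The normal form of an element of a group generated by `x`, `y` and a central `t` with `⁅x, y⁆` a
power of `t`. The factor `y ^ b` stands first so that the matrix of the word has no product of `a`
and `b` in its corner. -/
def normalWord (x y t : G) (a b c : ℤ) : G :=
  y ^ b * x ^ a * t ^ c

lemma map_normalWord {H : Type*} [Group H] (f : G →* H) (x y t : G) (a b c : ℤ) :
    f (normalWord x y t a b c) = normalWord (f x) (f y) (f t) a b c := by
  simp only [normalWord, map_mul, map_zpow]

lemma normalWord_zero (x y t : G) : normalWord x y t 0 0 0 = 1 := by
  simp only [normalWord, zpow_zero, mul_one]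

variable {k : ℤ}

lemma normalWord_mul_normalWord (hxt : Commute x t) (hyt : Commute y t) (hxy : ⁅x, y⁆ = t ^ k)
    (a b c a' b' c' : ℤ) :
    normalWord x y t a b c * normalWord x y t a' b' c' =
      normalWord x y t (a + a') (b + b') (c + c' + k * (a * b')) := by
  have swap : x ^ a * y ^ b' = y ^ b' * x ^ a * t ^ (k * (a * b')) := by
    rw [zpow_mul, ← hxy]
    apply zpow_mul_zpow_of_commute_commutator <;> rw [hxy]
    exacts [hxt.zpow_right k, hyt.zpow_right k]
  have comm_t (m : ℤ) : Commute (y ^ b' * x ^ a') (t ^ m) :=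
    (hyt.zpow_zpow b' m).mul_left (hxt.zpow_zpow a' m)
  unfold normalWord
  calc y ^ b * x ^ a * t ^ c * (y ^ b' * x ^ a' * t ^ c')
      = y ^ b * x ^ a * (t ^ c * (y ^ b' * x ^ a')) * t ^ c' := by group
    _ = y ^ b * (x ^ a * y ^ b') * x ^ a' * t ^ (c + c') := by rw [← (comm_t c).eq]; group
    _ = y ^ (b + b') * x ^ a * (t ^ (k * (a * b')) * x ^ a') * t ^ (c + c') := by
      rw [swap]; group
    _ = y ^ (b + b') * x ^ (a + a') * t ^ (c + c' + k * (a * b')) := by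
      rw [← (hxt.zpow_zpow a' _).eq]; group

lemma inv_normalWord (hxt : Commute x t) (hyt : Commute y t) (hxy : ⁅x, y⁆ = t ^ k)
    (a b c : ℤ) :
    (normalWord x y t a b c)⁻¹ = normalWord x y t (-a) (-b) (k * (a * b) - c) := by
  apply inv_eq_of_mul_eq_one_right
  rw [normalWord_mul_normalWord hxt hyt hxy, ← normalWord_zero x y t]
  congr 1 <;> ring

lemma exists_eq_normalWord_of_mem_closure (hxt : Commute x t) (hyt : Commute y t)
    (hxy : ⁅x, y⁆ = t ^ k) {g : G} (hg : g ∈ Subgroup.closure {x, y, t}) :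
    ∃ a b c, g = normalWord x y t a b c := by
  induction hg using Subgroup.closure_induction with
  | mem g hg =>
    rcases hg with rfl | rfl | rfl
    · exact ⟨1, 0, 0, by simp [normalWord]⟩
    · exact ⟨0, 1, 0, by simp [normalWord]⟩
    · exact ⟨0, 0, 1, by simp [normalWord]⟩
  | one => exact ⟨0, 0, 0, (normalWord_zero x y t).symm⟩
  | mul g h _ _ ihg ihh =>
    obtain ⟨a, b, c, rfl⟩ := ihg
    obtain ⟨a', b', c', rfl⟩ := ihh
    exact ⟨_, _, _, normalWord_mul_normalWord hxt hyt hxy a b c a' b' c'⟩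
  | inv g _ ih =>
    obtain ⟨a, b, c, rfl⟩ := ih
    exact ⟨_, _, _, inv_normalWord hxt hyt hxy a b c⟩

end CentralCommutator

section Unitriangular

variable {R : Type*} [Ring R]

/-- The upper unitriangular `3 × 3` matrix with entries `a`, `b` above the diagonal and `c` in the
corner, as an invertible matrix. These are the elements of the Heisenberg group over `R`. -/
def unitriangular (a b c : R) : (Matrix (Fin 3) (Fin 3) R)ˣ where
  val := !![1, a, c; 0, 1, b; 0, 0, 1]
  inv := !![1, -a, a * b - c; 0, 1, -b; 0, 0, 1]
  val_inv := by simp [Matrix.one_fin_three]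
  inv_val := by simp [Matrix.one_fin_three, ← add_assoc, sub_eq_add_neg]

lemma unitriangular_inj {a b c a' b' c' : R} :
    unitriangular a b c = unitriangular a' b' c' ↔ a = a' ∧ b = b' ∧ c = c' := by
  simp [unitriangular, Units.ext_iff, and_assoc, and_comm (a := c = c')]

lemma unitriangular_zero : unitriangular (0 : R) 0 0 = 1 :=
  Units.ext Matrix.one_fin_three.symm

lemma unitriangular_mul (a b c a' b' c' : R) :
    unitriangular a b c * unitriangular a' b' c' =
      unitriangular (a + a') (b + b') (c + c' + a * b') := by
  ext1
  simp [unitriangular, add_comm, add_left_comm, add_assoc]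

lemma commutator_unitriangular (a b c a' b' c' : R) :
    ⁅unitriangular a b c, unitriangular a' b' c'⁆ = unitriangular 0 0 (a * b' - a' * b) := by
  rw [commutatorElement_def, mul_inv_eq_iff_eq_mul, mul_inv_eq_iff_eq_mul]
  simp only [unitriangular_mul, unitriangular_inj, zero_add, zero_mul, add_zero]
  exact ⟨add_comm a a', add_comm b b', by abel⟩

lemma unitriangular_zpow {a b : R} (hab : a * b = 0) (c : R) (n : ℤ) :
    unitriangular a b c ^ n = unitriangular (n * a) (n * b) (n * c) := by
  have corner (m n : ℤ) : (m : R) * a * (n * b) = 0 := by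
    rw [mul_assoc, ← mul_assoc a, ← Int.cast_comm, mul_assoc, hab, mul_zero, mul_zero]
  let powers : Multiplicative ℤ →* (Matrix (Fin 3) (Fin 3) R)ˣ :=
    MonoidHom.mk' (fun n ↦ unitriangular (n.toAdd * a) (n.toAdd * b) (n.toAdd * c)) fun m n ↦ by
      simp [unitriangular_mul, add_mul, corner]
  simpa [powers] using (MonoidHom.apply_mint _ powers (.ofAdd n)).symm

lemma normalWord_unitriangular (s : R) (a b c : ℤ) :
    normalWord (unitriangular 1 0 0) (unitriangular 0 1 0) (unitriangular 0 0 s) a b c =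
      unitriangular (a : R) b (c * s) := by
  simp [normalWord, unitriangular_zpow, unitriangular_mul]

lemma injective_of_map_eq_unitriangular [CharZero R] [NoZeroDivisors R] {G : Type*} [Group G]
    {x y t : G} {s : R} (hG : ∀ g : G, ∃ a b c, g = normalWord x y t a b c) (hs : s ≠ 0)
    (f : G →* (Matrix (Fin 3) (Fin 3) R)ˣ) (hx : f x = unitriangular 1 0 0)
    (hy : f y = unitriangular 0 1 0) (ht : f t = unitriangular 0 0 s) :
    Function.Injective f := by
  rw [injective_iff_map_eq_one]
  intro g hg
  obtain ⟨a, b, c, rfl⟩ := hG g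
  have entries_eq_zero : (a : R) = 0 ∧ (b : R) = 0 ∧ (c : R) * s = 0 := by
    rwa [map_normalWord, hx, hy, ht, normalWord_unitriangular, ← unitriangular_zero,
      unitriangular_inj] at hg
  obtain ⟨rfl, rfl, rfl⟩ : a = 0 ∧ b = 0 ∧ c = 0 := by simpa [hs] using entries_eq_zero
  exact normalWord_zero x y t

end Unitriangular

section Presentation

open PresentedGroup Gen3

lemma commutator_of_gX_of_gY :
    ⁅(of gX : PresentedGroup heisRels), (of gY : PresentedGroup heisRels)⁆ = of gT ^ (4 : ℤ) :=
  mk_eq_mk_of_mul_inv_mem (.inl rfl)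

lemma commute_of_gX_of_gT : Commute (of gX : PresentedGroup heisRels) (of gT) :=
  commutatorElement_eq_one_iff_commute.mp <| one_of_mem (.inr (.inl rfl))

lemma commute_of_gY_of_gT : Commute (of gY : PresentedGroup heisRels) (of gT) :=
  commutatorElement_eq_one_iff_commute.mp <| one_of_mem (.inr (.inr rfl))

lemma exists_eq_normalWord_generators (g : PresentedGroup heisRels) :
    ∃ a b c, g = normalWord (of gX) (of gY) (of gT) a b c := by
  refine exists_eq_normalWord_of_mem_closure commute_of_gX_of_gT commute_of_gY_of_gT
    commutator_of_gX_of_gY (generated_by heisRels _ (fun i ↦ Subgroup.subset_closure ?_) g)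
  cases i <;> simp

/-- The matrices `M_X`, `M_Y`, `M_τ` as invertible matrices, indexed by the generators of `G₁`. -/
def heisMatrix : Gen3 → (Matrix (Fin 3) (Fin 3) ℚ)ˣ
  | gX => unitriangular 1 0 0
  | gY => unitriangular 0 1 0
  | gT => unitriangular 0 0 (1 / 4)

lemma range_heisMatrix :
    Set.range heisMatrix = {u : (Matrix (Fin 3) (Fin 3) ℚ)ˣ |
      (u : Matrix (Fin 3) (Fin 3) ℚ) = MX ∨ (u : Matrix (Fin 3) (Fin 3) ℚ) = MY ∨
      (u : Matrix (Fin 3) (Fin 3) ℚ) = MT} := by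
  ext u
  constructor
  · rintro ⟨_ | _ | _, rfl⟩
    exacts [.inl rfl, .inr (.inl rfl), .inr (.inr rfl)]
  · rintro (hX | hY | hT)
    exacts [⟨gX, Units.ext hX.symm⟩, ⟨gY, Units.ext hY.symm⟩, ⟨gT, Units.ext hT.symm⟩]

lemma lift_heisMatrix_eq_one : ∀ r ∈ heisRels, FreeGroup.lift heisMatrix r = 1 := by
  have commutator_XY : ⁅heisMatrix gX, heisMatrix gY⁆ = heisMatrix gT ^ 4 := by
    simp only [heisMatrix]
    rw [commutator_unitriangular, ← zpow_natCast, unitriangular_zpow (zero_mul 0)]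
    norm_num
  have commutator_XT : ⁅heisMatrix gX, heisMatrix gT⁆ = 1 := by
    simp [heisMatrix, commutator_unitriangular, unitriangular_zero]
  have commutator_YT : ⁅heisMatrix gY, heisMatrix gT⁆ = 1 := by
    simp [heisMatrix, commutator_unitriangular, unitriangular_zero]
  rintro r (rfl | rfl | rfl) <;>
    simp only [map_mul, map_inv, map_pow, FreeGroup.lift_apply_of]
  exacts [mul_inv_eq_one.mpr commutator_XY, commutator_XT, commutator_YT]

end Presentation

/-- The homomorphism from G₁ = ⟨X,Y,τ | [X,Y]=τ⁴, [X,τ]=[Y,τ]=1⟩ to GL₃(ℚ)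
sending X ↦ M_X, Y ↦ M_Y, τ ↦ M_τ is an isomorphism onto the subgroup of GL₃(ℚ)
generated by M_X, M_Y, M_τ. -/
theorem statement14 :
    ∃ f : PresentedGroup heisRels →* (Matrix (Fin 3) (Fin 3) ℚ)ˣ,
      ((f (PresentedGroup.of Gen3.gX) : Matrix (Fin 3) (Fin 3) ℚ) = MX ∧
       (f (PresentedGroup.of Gen3.gY) : Matrix (Fin 3) (Fin 3) ℚ) = MY ∧
       (f (PresentedGroup.of Gen3.gT) : Matrix (Fin 3) (Fin 3) ℚ) = MT) ∧
      Function.Injective f ∧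
      f.range = Subgroup.closure {u : (Matrix (Fin 3) (Fin 3) ℚ)ˣ |
        (u : Matrix (Fin 3) (Fin 3) ℚ) = MX ∨ (u : Matrix (Fin 3) (Fin 3) ℚ) = MY ∨
        (u : Matrix (Fin 3) (Fin 3) ℚ) = MT} := by
  let f := PresentedGroup.toGroup lift_heisMatrix_eq_one
  have map_of (i : Gen3) : f (PresentedGroup.of i) = heisMatrix i := PresentedGroup.toGroup.of _
  refine ⟨f, ⟨?_, ?_, ?_⟩, ?_, ?_⟩
  · rw [map_of]; rfl
  · rw [map_of]; rfl
  · rw [map_of]; rfl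
  · exact injective_of_map_eq_unitriangular exists_eq_normalWord_generators (by norm_num) f
      (map_of _) (map_of _) (map_of _)
  · rw [← range_heisMatrix]
    exact range_toGroup _
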